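/- arXiv:2502.15744 — 3 statements merged into one kernel-verified Lean document; each statement's English description precedes it below -/
import Mathlib

section
/- For k ∈ (0,2), the function |x|^k admits the integral representation |x|^k = c(k) ∫₀^∞ (1 - e^{-x²t²}) t^{-(k+1)} dt, where c(k) = k / Γ(1 - k/2). -/
open Real MeasureTheory

theorem integrableOn_one_sub_exp_neg_mul_sq_mul_rpow {b k : ℝ} (hb : 0 ≤ b) (hk₀ : 0 < k)
    (hk₂ : k < 2) :
    IntegrableOn (fun t : ℝ => (1 - exp (-(b * t ^ 2))) * t ^ (-k - 1)) (Set.Ioi 0) := by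
  have hmeas : Measurable fun t : ℝ => (1 - exp (-(b * t ^ 2))) * t ^ (-k - 1) := by fun_prop
  have hnonneg (t : ℝ) : 0 ≤ 1 - exp (-(b * t ^ 2)) :=
    sub_nonneg.2 (exp_le_one_iff.2 (neg_nonpos.2 (by positivity)))
  rw [← Set.Ioc_union_Ioi_eq_Ioi zero_le_one]
  refine IntegrableOn.union ?_ ?_
  · have hpow : IntegrableOn (fun t : ℝ => b * t ^ (1 - k)) (Set.Ioc 0 1) :=
      ((intervalIntegrable_iff_integrableOn_Ioc_of_le zero_le_one).1
        (intervalIntegral.intervalIntegrable_rpow' (by linarith))).const_mul b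
    refine hpow.mono' hmeas.aestronglyMeasurable
      ((ae_restrict_iff' measurableSet_Ioc).2 (.of_forall fun t ht => ?_))
    have ht₀ : 0 < t := ht.1
    rw [norm_of_nonneg (mul_nonneg (hnonneg t) (by positivity))]
    calc (1 - exp (-(b * t ^ 2))) * t ^ (-k - 1)
        ≤ (b * t ^ 2) * t ^ (-k - 1) := by
          gcongr
          linarith [add_one_le_exp (-(b * t ^ 2))]
      _ = b * t ^ (1 - k) := by
          rw [mul_assoc, ← rpow_two, ← rpow_add ht₀]
          ring_nf
  · refine (integrableOn_Ioi_rpow_of_lt (a := -k - 1) (by linarith) zero_lt_one).mono'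
      hmeas.aestronglyMeasurable
      ((ae_restrict_iff' measurableSet_Ioi).2 (.of_forall fun t ht => ?_))
    have ht₀ : 0 < t := zero_lt_one.trans ht
    rw [norm_of_nonneg (mul_nonneg (hnonneg t) (by positivity))]
    exact mul_le_of_le_one_left (by positivity) (by linarith [exp_pos (-(b * t ^ 2))])

open Filter Topology in
theorem tendsto_one_sub_exp_neg_mul_sq_mul_rpow_nhdsGT_zero {b k : ℝ} (hb : 0 ≤ b) (hk : k < 2) :
    Tendsto (fun t : ℝ => (1 - exp (-(b * t ^ 2))) * t ^ (-k)) (𝓝[>] 0) (𝓝 0) := by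
  have hlim : Tendsto (fun t : ℝ => b * t ^ (2 - k)) (𝓝[>] 0) (𝓝 0) := by
    have h : ContinuousAt (fun t : ℝ => b * t ^ (2 - k)) 0 :=
      (continuousAt_rpow_const 0 (2 - k) (Or.inr (by linarith))).const_mul b
    have h' := h.tendsto.mono_left (nhdsWithin_le_nhds (s := Set.Ioi (0 : ℝ)))
    simpa [zero_rpow (sub_pos.2 hk).ne'] using h'
  refine squeeze_zero' ?_ ?_ hlim
  · filter_upwards [self_mem_nhdsWithin] with t (ht : 0 < t)
    exact mul_nonneg (sub_nonneg.2 (exp_le_one_iff.2 (neg_nonpos.2 (by positivity))))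
      (by positivity)
  · filter_upwards [self_mem_nhdsWithin] with t (ht : 0 < t)
    calc (1 - exp (-(b * t ^ 2))) * t ^ (-k)
        ≤ (b * t ^ 2) * t ^ (-k) := by
          gcongr
          linarith [add_one_le_exp (-(b * t ^ 2))]
      _ = b * t ^ (2 - k) := by
          rw [mul_assoc, ← rpow_two, ← rpow_add ht]
          ring_nf

open Filter Topology in
theorem tendsto_one_sub_exp_neg_mul_sq_mul_rpow_atTop {b k : ℝ} (hb : 0 ≤ b) (hk : 0 < k) :
    Tendsto (fun t : ℝ => (1 - exp (-(b * t ^ 2))) * t ^ (-k)) atTop (𝓝 0) := by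
  refine squeeze_zero' ?_ ?_ (tendsto_rpow_neg_atTop hk)
  · filter_upwards [eventually_gt_atTop 0] with t ht
    exact mul_nonneg (sub_nonneg.2 (exp_le_one_iff.2 (neg_nonpos.2 (by positivity))))
      (by positivity)
  · filter_upwards [eventually_gt_atTop 0] with t ht
    exact mul_le_of_le_one_left (by positivity) (by linarith [exp_pos (-(b * t ^ 2))])

/-- Integration by parts reduces the integral to a Gaussian moment. -/
theorem integral_one_sub_exp_neg_mul_sq_mul_rpow {b k : ℝ} (hb : 0 < b) (hk₀ : 0 < k)
    (hk₂ : k < 2) :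
    ∫ t in Set.Ioi (0 : ℝ), (1 - exp (-(b * t ^ 2))) * t ^ (-k - 1) =
      b ^ (k / 2) * Gamma (1 - k / 2) / k := by
  have hu : ∀ t ∈ Set.Ioi (0 : ℝ), HasDerivAt (fun t : ℝ => 1 - exp (-(b * t ^ 2)))
      (2 * b * t * exp (-(b * t ^ 2))) t := fun t _ => by
    convert! ((((hasDerivAt_pow 2 t).const_mul b).neg).exp).const_sub 1 using 1
    simp
    ring
  have hv : ∀ t ∈ Set.Ioi (0 : ℝ), HasDerivAt (fun t : ℝ => t ^ (-k))
      (-k * t ^ (-k - 1)) t := fun t ht => hasDerivAt_rpow_const (Or.inl (ne_of_gt ht))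
  have hmoment : Set.EqOn (fun t : ℝ => 2 * b * (t ^ (1 - k) * exp (-b * t ^ (2 : ℝ))))
      (fun t => 2 * b * t * exp (-(b * t ^ 2)) * t ^ (-k)) (Set.Ioi 0) := fun t ht => by
    have h : t ^ (1 - k) = t * t ^ (-k) := by
      rw [sub_eq_add_neg, rpow_add ht, rpow_one]
    simp only [h, rpow_two, neg_mul]
    ring
  have hparts := integral_Ioi_mul_deriv_eq_deriv_mul hu hv
    (IntegrableOn.congr_fun
      ((integrableOn_one_sub_exp_neg_mul_sq_mul_rpow hb.le hk₀ hk₂).const_mul (-k))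
      (fun t _ => by simp only [Pi.mul_apply]; ring) measurableSet_Ioi)
    (IntegrableOn.congr_fun
      ((integrableOn_rpow_mul_exp_neg_mul_rpow (s := 1 - k) (by linarith) two_pos hb).const_mul
        (2 * b)) hmoment measurableSet_Ioi)
    (tendsto_one_sub_exp_neg_mul_sq_mul_rpow_nhdsGT_zero hb.le hk₂)
    (tendsto_one_sub_exp_neg_mul_sq_mul_rpow_atTop hb.le hk₀)
  rw [← setIntegral_congr_fun measurableSet_Ioi hmoment, integral_const_mul,
    integral_rpow_mul_exp_neg_mul_rpow two_pos (by linarith) hb] at hparts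
  simp only [mul_left_comm _ (-k), integral_const_mul] at hparts
  have hpow : b ^ (k / 2) = b * b ^ (-(1 - k + 1) / 2) := by
    rw [← rpow_one_add' hb.le (by linarith)]
    ring_nf
  rw [show (1 - k + 1) / 2 = 1 - k / 2 by ring] at hparts
  rw [eq_div_iff hk₀.ne', hpow]
  linarith

theorem abs_rpow_integral_repr (k : ℝ) (hk : k ∈ Set.Ioo (0:ℝ) 2) (x : ℝ) :
    |x| ^ k = (k / Real.Gamma (1 - k / 2)) *
      ∫ t in Set.Ioi (0:ℝ), (1 - Real.exp (-(x ^ 2 * t ^ 2))) / t ^ (k + 1) := by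
  obtain ⟨hk₀, hk₂⟩ := hk
  rcases eq_or_ne x 0 with rfl | hx
  · simp [zero_rpow hk₀.ne']
  have hcongr : Set.EqOn (fun t : ℝ => (1 - exp (-(x ^ 2 * t ^ 2))) / t ^ (k + 1))
      (fun t => (1 - exp (-(x ^ 2 * t ^ 2))) * t ^ (-k - 1)) (Set.Ioi 0) := fun t ht => by
    simp only [div_eq_mul_inv, ← rpow_neg (le_of_lt ht), neg_add']
  have hGamma : Gamma (1 - k / 2) ≠ 0 := (Gamma_pos_of_pos (by linarith)).ne'
  have hpow : (x ^ 2) ^ (k / 2) = |x| ^ k := by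
    rw [← sq_abs, ← rpow_two, ← rpow_mul (abs_nonneg x)]
    ring_nf
  rw [setIntegral_congr_fun measurableSet_Ioi hcongr,
    integral_one_sub_exp_neg_mul_sq_mul_rpow (by positivity) hk₀ hk₂, hpow]
  field_simp
end

section
/- For k ∈ (0,2), for every compactly supported signed Borel measure μ on ℝ with μ(ℝ) = 0 and μ ≠ 0, we have ∫∫ |x - y|^k μ(dx) μ(dy) < 0. -/
open Real MeasureTheory

/-- The kernel `(1 - cos (t x)) t ^ (-1 - k)`, whose integral over `t > 0` is a multiple
of `|x| ^ k`. -/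
noncomputable def rieszKernel (k x t : ℝ) : ℝ := (1 - cos (t * x)) * t ^ (-1 - k)

/-- The constant in `∫ t in Ioi 0, rieszKernel k x t = rieszConst k * |x| ^ k`. -/
noncomputable def rieszConst (k : ℝ) : ℝ := ∫ t in Set.Ioi (0 : ℝ), rieszKernel k 1 t

lemma rieszKernel_nonneg (k x : ℝ) {t : ℝ} (ht : 0 < t) : 0 ≤ rieszKernel k x t :=
  mul_nonneg (sub_nonneg.2 (cos_le_one _)) (rpow_nonneg ht.le _)

lemma integrableOn_rieszKernel {k : ℝ} (hk : k ∈ Set.Ioo (0 : ℝ) 2) (x : ℝ) :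
    IntegrableOn (rieszKernel k x) (Set.Ioi 0) := by
  have hm : Measurable (rieszKernel k x) := by
    unfold rieszKernel
    fun_prop
  rw [← Set.Ioc_union_Ioi_eq_Ioi zero_le_one]
  refine IntegrableOn.union ?_ ?_
  · have h : IntegrableOn (fun t : ℝ => x ^ 2 / 2 * t ^ (1 - k)) (Set.Ioc 0 1) := by
      refine Integrable.const_mul ?_ _
      exact (intervalIntegrable_iff_integrableOn_Ioc_of_le zero_le_one).1
        (intervalIntegral.intervalIntegrable_rpow' (by linarith [hk.2]))
    refine Integrable.mono' h hm.aestronglyMeasurable ?_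
    filter_upwards [ae_restrict_mem measurableSet_Ioc] with t ht
    rw [norm_of_nonneg (rieszKernel_nonneg k x ht.1)]
    have h1 : 1 - cos (t * x) ≤ (t * x) ^ 2 / 2 := by
      linarith [one_sub_sq_div_two_le_cos (x := t * x)]
    have h2 : t ^ (1 - k) = t ^ 2 * t ^ (-1 - k) := by
      rw [← rpow_natCast, ← rpow_add ht.1]
      congr 1
      push_cast
      ring
    calc rieszKernel k x t ≤ (t * x) ^ 2 / 2 * t ^ (-1 - k) :=
          mul_le_mul_of_nonneg_right h1 (rpow_nonneg ht.1.le _)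
      _ = x ^ 2 / 2 * t ^ (1 - k) := by rw [h2]; ring
  · have h : IntegrableOn (fun t : ℝ => 2 * t ^ (-1 - k)) (Set.Ioi 1) :=
      (integrableOn_Ioi_rpow_of_lt (by linarith [hk.1]) zero_lt_one).const_mul _
    refine Integrable.mono' h hm.aestronglyMeasurable ?_
    filter_upwards [ae_restrict_mem measurableSet_Ioi] with t ht
    have ht0 : (0 : ℝ) < t := zero_lt_one.trans ht
    rw [norm_of_nonneg (rieszKernel_nonneg k x ht0)]
    exact mul_le_mul_of_nonneg_right (by linarith [neg_one_le_cos (t * x)])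
      (rpow_nonneg ht0.le _)

/-- A nonnegative integrable function on `(0, ∞)`, continuous there, with zero integral
vanishes. -/
lemma eqOn_zero_of_setIntegral_eq_zero {f : ℝ → ℝ} (hc : ContinuousOn f (Set.Ioi 0))
    (h0 : ∀ t, 0 < t → 0 ≤ f t) (hi : IntegrableOn f (Set.Ioi 0))
    (h : ∫ t in Set.Ioi (0 : ℝ), f t = 0) : ∀ t, 0 < t → f t = 0 := by
  have hae : f =ᵐ[volume.restrict (Set.Ioi 0)] fun _ => 0 := by
    refine (integral_eq_zero_iff_of_nonneg_ae ?_ hi).1 h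
    filter_upwards [ae_restrict_mem measurableSet_Ioi] with t ht using h0 t ht
  exact Measure.eqOn_open_of_ae_eq hae isOpen_Ioi hc continuousOn_const

lemma rieszConst_pos {k : ℝ} (hk : k ∈ Set.Ioo (0 : ℝ) 2) : 0 < rieszConst k := by
  have h0 : 0 ≤ rieszConst k :=
    setIntegral_nonneg measurableSet_Ioi fun t ht => rieszKernel_nonneg k 1 ht
  refine lt_of_le_of_ne h0 fun h => ?_
  have hc : ContinuousOn (rieszKernel k 1) (Set.Ioi 0) := by
    refine ContinuousOn.mul (by fun_prop) ?_
    exact fun t ht => (continuousAt_rpow_const _ _ (Or.inl (ne_of_gt ht))).continuousWithinAt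
  have hz := eqOn_zero_of_setIntegral_eq_zero hc (fun t ht => rieszKernel_nonneg k 1 ht)
    (integrableOn_rieszKernel hk 1) h.symm π pi_pos
  have hp : 0 < π ^ (-1 - k) := rpow_pos_of_pos pi_pos _
  simp only [rieszKernel, mul_one, cos_pi] at hz
  linarith

lemma integral_rieszKernel {k : ℝ} (hk : k ∈ Set.Ioo (0 : ℝ) 2) (x : ℝ) :
    ∫ t in Set.Ioi (0 : ℝ), rieszKernel k x t = rieszConst k * |x| ^ k := by
  rcases eq_or_ne x 0 with rfl | hx
  · simp [rieszKernel, zero_rpow hk.1.ne']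
  have hx' : 0 < |x| := abs_pos.2 hx
  have h1 : ∫ t in Set.Ioi (0 : ℝ), rieszKernel k 1 (|x| * t) = |x|⁻¹ * rieszConst k := by
    rw [integral_comp_mul_left_Ioi _ _ hx']
    simp [rieszConst]
  have h2 : ∫ t in Set.Ioi (0 : ℝ), rieszKernel k 1 (|x| * t)
      = |x| ^ (-1 - k) * ∫ t in Set.Ioi (0 : ℝ), rieszKernel k x t := by
    rw [← integral_const_mul]
    refine setIntegral_congr_fun measurableSet_Ioi fun t ht => ?_
    have hcos : cos (|x| * t) = cos (t * x) := by
      rw [← cos_abs (t * x), abs_mul, abs_of_pos (show 0 < t from ht), mul_comm]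
    simp only [rieszKernel, mul_one, hcos, mul_rpow hx'.le (le_of_lt ht)]
    ring
  have h3 : |x| ^ k * |x| ^ (-1 - k) = |x|⁻¹ := by
    rw [← rpow_add hx', ← rpow_neg_one]
    congr 1
    ring
  have h4 : 0 < |x| ^ (-1 - k) := rpow_pos_of_pos hx' _
  refine mul_left_cancel₀ h4.ne' ?_
  rw [← h2, h1, ← h3]
  ring

section Energy

variable {A B : Measure ℝ} [IsFiniteMeasure A] [IsFiniteMeasure B]

lemma integrable_abs_sub_rpow {k : ℝ} (hk : 0 < k)
    (hA : ∃ K : Set ℝ, IsCompact K ∧ A Kᶜ = 0) (hB : ∃ K : Set ℝ, IsCompact K ∧ B Kᶜ = 0) :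
    Integrable (fun p : ℝ × ℝ => |p.1 - p.2| ^ k) (A.prod B) := by
  obtain ⟨K, hK, hAK⟩ := hA
  obtain ⟨L, hL, hBL⟩ := hB
  have hc : Continuous fun p : ℝ × ℝ => |p.1 - p.2| ^ k :=
    (by fun_prop : Continuous fun p : ℝ × ℝ => |p.1 - p.2|).rpow_const fun _ => Or.inr hk.le
  obtain ⟨M, hM⟩ := (hK.prod hL).exists_bound_of_continuousOn hc.continuousOn
  refine Integrable.of_bound hc.aestronglyMeasurable M ?_
  have h1 : ∀ᵐ p ∂A.prod B, p.1 ∈ K := Measure.quasiMeasurePreserving_fst.ae hAK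
  have h2 : ∀ᵐ p ∂A.prod B, p.2 ∈ L := Measure.quasiMeasurePreserving_snd.ae hBL
  filter_upwards [h1, h2] with p hp hq using hM p ⟨hp, hq⟩

lemma integrable_cos_mul (t : ℝ) : Integrable (fun x => cos (t * x)) A :=
  Integrable.of_bound (by fun_prop) 1 (ae_of_all _ fun x => abs_cos_le_one _)

lemma integrable_sin_mul (t : ℝ) : Integrable (fun x => sin (t * x)) A :=
  Integrable.of_bound (by fun_prop) 1 (ae_of_all _ fun x => abs_sin_le_one _)

lemma integral_one_sub_cos_prod (t : ℝ) :
    ∫ p : ℝ × ℝ, (1 - cos (t * (p.1 - p.2))) ∂A.prod B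
      = A.real Set.univ * B.real Set.univ
        - ((∫ x, cos (t * x) ∂A) * (∫ x, cos (t * x) ∂B)
          + (∫ x, sin (t * x) ∂A) * (∫ x, sin (t * x) ∂B)) := by
  have hcc := (integrable_cos_mul (A := A) t).mul_prod (integrable_cos_mul (A := B) t)
  have hss := (integrable_sin_mul (A := A) t).mul_prod (integrable_sin_mul (A := B) t)
  simp only [mul_sub, cos_sub]
  have hsum : Integrable (fun p : ℝ × ℝ => cos (t * p.1) * cos (t * p.2)
      + sin (t * p.1) * sin (t * p.2)) (A.prod B) := hcc.add hss
  rw [integral_sub (integrable_const _) hsum, integral_add hcc hss,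
    integral_prod_mul (fun x => cos (t * x)) (fun x => cos (t * x)),
    integral_prod_mul (fun x => sin (t * x)) (fun x => sin (t * x))]
  simp [measureReal_def, ← Set.univ_prod_univ, Measure.prod_prod]

lemma integrable_rieszKernel_prod {k : ℝ} (hk : k ∈ Set.Ioo (0 : ℝ) 2)
    (hA : ∃ K : Set ℝ, IsCompact K ∧ A Kᶜ = 0) (hB : ∃ K : Set ℝ, IsCompact K ∧ B Kᶜ = 0) :
    Integrable (fun q : (ℝ × ℝ) × ℝ => rieszKernel k (q.1.1 - q.1.2) q.2)
      ((A.prod B).prod (volume.restrict (Set.Ioi 0))) := by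
  have hm : Measurable fun q : (ℝ × ℝ) × ℝ => rieszKernel k (q.1.1 - q.1.2) q.2 := by
    unfold rieszKernel
    fun_prop
  rw [integrable_prod_iff hm.aestronglyMeasurable]
  refine ⟨ae_of_all _ fun p => integrableOn_rieszKernel hk (p.1 - p.2), ?_⟩
  have hnorm : ∀ p : ℝ × ℝ, ∫ t in Set.Ioi (0 : ℝ), ‖rieszKernel k (p.1 - p.2) t‖
      = rieszConst k * |p.1 - p.2| ^ k := fun p => by
    rw [← integral_rieszKernel hk]
    exact setIntegral_congr_fun measurableSet_Ioi fun t ht =>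
      norm_of_nonneg (rieszKernel_nonneg k _ ht)
  simp only [hnorm]
  exact (integrable_abs_sub_rpow hk.1 hA hB).const_mul (rieszConst k)

/-- The mutual energy of two measures as an integral over frequencies. -/
lemma rieszConst_mul_energy {k : ℝ} (hk : k ∈ Set.Ioo (0 : ℝ) 2)
    (hA : ∃ K : Set ℝ, IsCompact K ∧ A Kᶜ = 0) (hB : ∃ K : Set ℝ, IsCompact K ∧ B Kᶜ = 0) :
    IntegrableOn (fun t : ℝ => (∫ p : ℝ × ℝ, (1 - cos (t * (p.1 - p.2))) ∂A.prod B)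
        * t ^ (-1 - k)) (Set.Ioi 0) ∧
    rieszConst k * ∫ x, ∫ y, |x - y| ^ k ∂B ∂A
      = ∫ t in Set.Ioi (0 : ℝ), (∫ p : ℝ × ℝ, (1 - cos (t * (p.1 - p.2))) ∂A.prod B)
        * t ^ (-1 - k) := by
  have hi := integrable_rieszKernel_prod hk hA hB
  simp only [← integral_mul_const]
  refine ⟨hi.integral_prod_right, ?_⟩
  rw [← integral_prod _ (integrable_abs_sub_rpow hk.1 hA hB), ← integral_const_mul]
  simp only [← integral_rieszKernel hk]
  exact integral_integral_swap hi

end Energy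

lemma charFun_eq_integral_cos_add_integral_sin (A : Measure ℝ) [IsFiniteMeasure A] (t : ℝ) :
    charFun A t = (∫ x, cos (t * x) ∂A : ℝ) + (∫ x, sin (t * x) ∂A : ℝ) * Complex.I := by
  rw [charFun_apply_real, ← integral_complex_ofReal, ← integral_complex_ofReal,
    ← integral_mul_const, ← integral_add (integrable_cos_mul t).ofReal
      ((integrable_sin_mul t).ofReal.mul_const _)]
  refine integral_congr_ae (ae_of_all _ fun x => ?_)
  simp [Complex.exp_mul_I, ← Complex.ofReal_mul]

/-- Finite measures on `ℝ` are determined by their characteristic function on `(0, ∞)` together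
with their total mass. -/
lemma ext_of_integral_cos_sin_of_pos {P N : Measure ℝ} [IsFiniteMeasure P] [IsFiniteMeasure N]
    (hmass : P Set.univ = N Set.univ)
    (hcos : ∀ t, 0 < t → ∫ x, cos (t * x) ∂P = ∫ x, cos (t * x) ∂N)
    (hsin : ∀ t, 0 < t → ∫ x, sin (t * x) ∂P = ∫ x, sin (t * x) ∂N) : P = N := by
  have hpos : ∀ t, 0 < t → charFun P t = charFun N t := fun t ht => by
    rw [charFun_eq_integral_cos_add_integral_sin, charFun_eq_integral_cos_add_integral_sin,
      hcos t ht, hsin t ht]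
  refine Measure.ext_of_charFun (funext fun t => ?_)
  rcases lt_trichotomy t 0 with ht | rfl | ht
  · rw [← neg_neg t, charFun_neg (-t), charFun_neg (-t), hpos _ (neg_pos.2 ht)]
  · simp [measureReal_def, hmass]
  · exact hpos t ht

lemma continuous_integral_comp_mul {f : ℝ → ℝ} (hf : Continuous f) (hb : ∀ x, |f x| ≤ 1)
    (A : Measure ℝ) [IsFiniteMeasure A] : Continuous fun t => ∫ x, f (t * x) ∂A :=
  continuous_of_dominated (bound := fun _ => 1)
    (fun t => (by fun_prop : Continuous fun x => f (t * x)).aestronglyMeasurable)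
    (fun _ => ae_of_all _ fun _ => hb _) (integrable_const _)
    (ae_of_all _ fun _ => by fun_prop)

/-- For `k ∈ (0,2)`, every nonzero compactly supported signed Borel measure on `ℝ` with total
mass zero (written as a difference `P - N` of finite measures with equal total mass) has strictly
negative `|x-y|^k`-energy:
`∫∫ |x-y|^k d(P-N)d(P-N) = ∫∫ dPdP + ∫∫ dNdN - 2∫∫ dPdN < 0`. -/
theorem riesz_energy_neg_of_balanced (k : ℝ) (hk : k ∈ Set.Ioo (0:ℝ) 2)
    (P N : Measure ℝ) [IsFiniteMeasure P] [IsFiniteMeasure N]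
    (hPc : ∃ K : Set ℝ, IsCompact K ∧ P Kᶜ = 0)
    (hNc : ∃ K : Set ℝ, IsCompact K ∧ N Kᶜ = 0)
    (hbal : P Set.univ = N Set.univ) (hne : P ≠ N) :
    (∫ x, ∫ y, |x - y| ^ k ∂P ∂P) + (∫ x, ∫ y, |x - y| ^ k ∂N ∂N)
      < 2 * ∫ x, ∫ y, |x - y| ^ k ∂N ∂P := by
  have hmass : P.real Set.univ = N.real Set.univ := by rw [measureReal_def, measureReal_def, hbal]
  obtain ⟨iPP, ePP⟩ := rieszConst_mul_energy hk hPc hPc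
  obtain ⟨iNN, eNN⟩ := rieszConst_mul_energy hk hNc hNc
  obtain ⟨iPN, ePN⟩ := rieszConst_mul_energy hk hPc hNc
  simp only [integral_one_sub_cos_prod, hmass] at iPP iNN iPN ePP eNN ePN
  set D : ℝ → ℝ := fun t => ((∫ x, cos (t * x) ∂P) - ∫ x, cos (t * x) ∂N) ^ 2
    + ((∫ x, sin (t * x) ∂P) - ∫ x, sin (t * x) ∂N) ^ 2 with hD
  have hDi : IntegrableOn (fun t => D t * t ^ (-1 - k)) (Set.Ioi 0) ∧
      rieszConst k * (2 * (∫ x, ∫ y, |x - y| ^ k ∂N ∂P) - ((∫ x, ∫ y, |x - y| ^ k ∂P ∂P)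
        + ∫ x, ∫ y, |x - y| ^ k ∂N ∂N)) = ∫ t in Set.Ioi (0 : ℝ), D t * t ^ (-1 - k) := by
    have hi := (iPN.const_mul 2).sub (iPP.add iNN)
    have he := integral_sub (iPN.const_mul 2) (iPP.add iNN)
    simp only [Pi.add_apply] at he
    rw [integral_add iPP iNN, integral_const_mul, ← ePP, ← eNN, ← ePN] at he
    refine ⟨hi.congr (ae_of_all _ fun t => ?_), ?_⟩
    · simp only [hD, Pi.sub_apply, Pi.add_apply]
      ring
    · rw [mul_sub, mul_add, mul_left_comm, ← he]
      refine integral_congr_ae (ae_of_all _ fun t => ?_)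
      simp only [hD]
      ring
  obtain ⟨hint, heq⟩ := hDi
  have hD0 : ∀ t, 0 < t → 0 ≤ D t * t ^ (-1 - k) := fun t ht =>
    mul_nonneg (by positivity) (rpow_nonneg ht.le _)
  have hDc : Continuous D := by
    have hc := continuous_integral_comp_mul continuous_cos abs_cos_le_one
    have hs := continuous_integral_comp_mul continuous_sin abs_sin_le_one
    exact (((hc P).sub (hc N)).pow 2).add (((hs P).sub (hs N)).pow 2)
  have hpos : 0 < ∫ t in Set.Ioi (0 : ℝ), D t * t ^ (-1 - k) := by
    refine lt_of_le_of_ne (setIntegral_nonneg measurableSet_Ioi hD0) fun h => hne ?_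
    have hc : ContinuousOn (fun t => D t * t ^ (-1 - k)) (Set.Ioi 0) :=
      hDc.continuousOn.mul fun t ht =>
        (continuousAt_rpow_const _ _ (Or.inl (ne_of_gt ht))).continuousWithinAt
    have hz : ∀ t, 0 < t → D t = 0 := fun t ht =>
      (mul_eq_zero.1 (eqOn_zero_of_setIntegral_eq_zero hc hD0 hint h.symm t ht)).resolve_right
        (rpow_pos_of_pos ht _).ne'
    refine ext_of_integral_cos_sin_of_pos hbal (fun t ht => ?_) fun t ht => ?_
    · have := hz t ht
      simp only [hD] at this
      nlinarith
    · have := hz t ht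
      simp only [hD] at this
      nlinarith
  rw [← heq] at hpos
  linarith [pos_of_mul_pos_right hpos (rieszConst_pos hk).le]
end

section
/- For k ∈ (0,1) and x ∈ (0,1): ∫₀¹ sign(x-t) |x-t|^{k-1} (1-t)^{(1-k)/2} t^{-(1+k)/2} (t + (1-k)/2) dt = (π(1-k)/sin((1-k)π/2)) · x. -/
open Real

open MeasureTheory Set

/-- The real beta integrand is integrable on the unit interval. -/
theorem integrableOn_beta {p q : ℝ} (hp : 0 < p) (hq : 0 < q) :
    IntegrableOn (fun w : ℝ => w ^ (p - 1) * (1 - w) ^ (q - 1)) (Ioo 0 1) := by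
  have h := Complex.betaIntegral_convergent (u := p) (v := q) (by simpa) (by simpa)
  rw [intervalIntegrable_iff_integrableOn_Ioo_of_le zero_le_one] at h
  refine (IntegrableOn.congr_fun h.re (fun w hw => ?_) measurableSet_Ioo)
  have h1 : ((w : ℂ) ^ ((p : ℂ) - 1) * (1 - (w : ℂ)) ^ ((q : ℂ) - 1))
      = ((w ^ (p - 1) * (1 - w) ^ (q - 1) : ℝ) : ℂ) := by
    push_cast [Complex.ofReal_cpow hw.1.le, Complex.ofReal_cpow (sub_nonneg.2 hw.2.le)]
    rfl
  simp only [h1]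
  exact Complex.ofReal_re _

/-- The real beta integral in terms of the gamma function. -/
theorem integral_Ioo_beta {p q : ℝ} (hp : 0 < p) (hq : 0 < q) :
    ∫ w in Ioo (0 : ℝ) 1, w ^ (p - 1) * (1 - w) ^ (q - 1)
      = Gamma p * Gamma q / Gamma (p + q) := by
  have h := ProbabilityTheory.beta_eq_betaIntegralReal p q hp hq
  rw [ProbabilityTheory.beta, Complex.betaIntegral, intervalIntegral.integral_of_le zero_le_one,
    integral_Ioc_eq_integral_Ioo] at h
  rw [h]
  have h1 : ∫ w in Ioo (0 : ℝ) 1, ((w : ℂ) ^ ((p : ℂ) - 1) * (1 - (w : ℂ)) ^ ((q : ℂ) - 1))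
      = ∫ w in Ioo (0 : ℝ) 1, ((w ^ (p - 1) * (1 - w) ^ (q - 1) : ℝ) : ℂ) := by
    refine setIntegral_congr_fun measurableSet_Ioo fun w hw => ?_
    push_cast [Complex.ofReal_cpow hw.1.le, Complex.ofReal_cpow (sub_nonneg.2 hw.2.le)]
    rfl
  rw [h1, integral_complex_ofReal, Complex.ofReal_re]

/-- A combination of two beta integrals with exponent `-a` at `0`. -/
theorem integral_Ioo_beta_combination {a : ℝ} (ha : 0 < a) (ha1 : a < 1) (c : ℝ) :
    ∫ w in Ioo (0 : ℝ) 1, w ^ (-a) * (1 - w) ^ a * (a / (1 - w) - c)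
      = a * (1 - c) * (π / sin (π * a)) := by
  have h1 := integral_Ioo_beta (p := 1 - a) (q := a) (by linarith) ha
  have h2 := integral_Ioo_beta (p := 1 - a) (q := a + 1) (by linarith) (by linarith)
  have i1 := integrableOn_beta (p := 1 - a) (q := a) (by linarith) ha
  have i2 := integrableOn_beta (p := 1 - a) (q := a + 1) (by linarith) (by linarith)
  rw [show 1 - a + (a + 1) = 2 by ring, Gamma_two, Gamma_add_one ha.ne', div_one] at h2
  rw [sub_add_cancel, Gamma_one, div_one] at h1
  have hΓ := Gamma_mul_Gamma_one_sub a
  calc _ = ∫ w in Ioo (0 : ℝ) 1, (a * (w ^ (1 - a - 1) * (1 - w) ^ (a - 1))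
          - c * (w ^ (1 - a - 1) * (1 - w) ^ (a + 1 - 1))) := by
        refine setIntegral_congr_fun measurableSet_Ioo fun w hw => ?_
        have hw1 : 0 < 1 - w := sub_pos.2 hw.2
        rw [rpow_sub_one hw1.ne', add_sub_cancel_right, show 1 - a - 1 = -a by ring]
        ring
    _ = _ := by
        rw [integral_sub (i1.const_mul a) (i2.const_mul c), integral_const_mul,
          integral_const_mul, h1, h2, ← hΓ]
        ring

/-- The product of the powers depends on `t` through `(x - t) ^ 2 / (t * (1 - t))` and a rational
factor. -/
theorem rpow_jacobi_weight_eq {a d t : ℝ} (hd : 0 < d) (ht : 0 < t) (ht1 : t < 1) :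
    d ^ (-(2 * a)) * (1 - t) ^ a * t ^ (a - 1) = (d ^ 2 / (t * (1 - t))) ^ (-a) / t := by
  have h1 : 0 < 1 - t := sub_pos.2 ht1
  rw [rpow_sub_one ht.ne', div_rpow (by positivity) (by positivity), mul_rpow ht.le h1.le,
    rpow_neg ht.le, rpow_neg h1.le, ← rpow_natCast d 2, ← rpow_mul hd.le]
  have : (0 : ℝ) < t ^ a := by positivity
  have : (0 : ℝ) < (1 - t) ^ a := by positivity
  rw [show ((2 : ℕ) : ℝ) * -a = -(2 * a) by push_cast; ring]
  field_simp

/-- Change of variables along `s ↦ r (1 - s) ^ 2 / (s + r (1 - s) ^ 2)`, a decreasing bijection of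
the unit interval. -/
theorem integral_Ioo_comp_quadratic_ratio {r : ℝ} (hr : 0 < r) (g : ℝ → ℝ) :
    ∫ w in Ioo (0 : ℝ) 1, g w = ∫ s in Ioo (0 : ℝ) 1,
      (r * (1 - s ^ 2) / (s + r * (1 - s) ^ 2) ^ 2)
        * g (r * (1 - s) ^ 2 / (s + r * (1 - s) ^ 2)) := by
  set W : ℝ → ℝ := fun s => r * (1 - s) ^ 2 / (s + r * (1 - s) ^ 2) with hW
  have hD : ∀ s ∈ Icc (0 : ℝ) 1, 0 < s + r * (1 - s) ^ 2 := by
    intro s hs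
    rcases hs.1.eq_or_lt with h | h
    · rw [← h]; simpa
    · positivity
  have himg : W '' Ioo 0 1 = Ioo 0 1 := by
    apply Subset.antisymm
    · rintro _ ⟨s, hs, rfl⟩
      have h0 := hD s (Ioo_subset_Icc_self hs)
      have h1 : 0 < 1 - s := sub_pos.2 hs.2
      have h2 := hs.1
      refine ⟨by positivity, ?_⟩
      simp only [hW]
      rw [div_lt_one h0]
      linarith
    · have hc : ContinuousOn W (Icc 0 1) :=
        ContinuousOn.div (by fun_prop) (by fun_prop) fun s hs => (hD s hs).ne'
      have := intermediate_value_Ioo' zero_le_one hc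
      simpa [hW, hr.ne'] using this
  have hinj : InjOn W (Ioo 0 1) := by
    intro s hs u hu h
    have h0 := hD s (Ioo_subset_Icc_self hs)
    have h1 := hD u (Ioo_subset_Icc_self hu)
    simp only [hW] at h
    rw [div_eq_div_iff h0.ne' h1.ne'] at h
    have h2 : r * ((u - s) * (1 - s * u)) = 0 := by linear_combination h
    have h3 : 1 - s * u ≠ 0 := by nlinarith [hs.1, hs.2, hu.1, hu.2]
    simp only [mul_eq_zero, hr.ne', h3, or_false, false_or] at h2
    linarith
  have hder : ∀ s ∈ Ioo (0 : ℝ) 1, HasDerivWithinAt W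
      (-(r * (1 - s ^ 2) / (s + r * (1 - s) ^ 2) ^ 2)) (Ioo 0 1) s := by
    intro s hs
    have h0 := hD s (Ioo_subset_Icc_self hs)
    have h1 : HasDerivAt (fun s : ℝ => r * (1 - s) ^ 2) (r * (2 * (1 - s) * (-1))) s := by
      simpa using ((((hasDerivAt_id s).const_sub 1).pow 2).const_mul r)
    have h2 := h1.div ((hasDerivAt_id s).add h1) h0.ne'
    refine (h2.congr_deriv ?_).hasDerivWithinAt
    simp only [Pi.add_apply, id]
    rw [← neg_div]
    congr 1
    ring
  have key := integral_image_eq_integral_abs_deriv_smul measurableSet_Ioo hder hinj g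
  rw [himg] at key
  rw [key]
  refine setIntegral_congr_fun measurableSet_Ioo fun s hs => ?_
  have h0 : 0 ≤ 1 - s ^ 2 := by nlinarith [hs.1, hs.2]
  simp only [smul_eq_mul, abs_neg]
  rw [abs_of_nonneg (by positivity)]

/-- The Möbius transformation with `0 ↦ 0`, `1 ↦ x`, `∞ ↦ 1` as a change of variables. -/
theorem mobius_left {x : ℝ} (hx : 0 < x) (hx1 : x < 1) (f : ℝ → ℝ) :
    (∫ t in Ioo 0 x, f t = ∫ s in Ioo (0 : ℝ) 1,
      x * (1 - x) / (1 - x + x * s) ^ 2 * f (x * s / (1 - x + x * s))) ∧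
    (IntegrableOn f (Ioo 0 x) ↔ IntegrableOn (fun s =>
      x * (1 - x) / (1 - x + x * s) ^ 2 * f (x * s / (1 - x + x * s))) (Ioo 0 1)) := by
  have hy : 0 < 1 - x := sub_pos.2 hx1
  set T : ℝ → ℝ := fun s => x * s / (1 - x + x * s) with hT
  have hE : ∀ s ∈ Ioo (0 : ℝ) 1, 0 < 1 - x + x * s := fun s hs => by have := hs.1; positivity
  have himg : T '' Ioo 0 1 = Ioo 0 x := by
    ext t
    constructor
    · rintro ⟨s, hs, rfl⟩
      have h0 := hE s hs
      have h1 := hs.1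
      refine ⟨by positivity, ?_⟩
      simp only [hT]
      rw [div_lt_iff₀ h0]
      nlinarith [mul_pos (mul_pos hx hy) (sub_pos.2 hs.2)]
    · rintro ⟨h0, h1⟩
      have h2 : 0 < 1 - t := by linarith
      refine ⟨t * (1 - x) / (x * (1 - t)), ⟨by positivity, ?_⟩, ?_⟩
      · rw [div_lt_one (by positivity)]; nlinarith
      · simp only [hT]
        have : 1 - x + x * (t * (1 - x) / (x * (1 - t))) = (1 - x) / (1 - t) := by
          field_simp; ring
        rw [this]
        field_simp
  have hinj : InjOn T (Ioo 0 1) := by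
    intro s hs u hu h
    simp only [hT] at h
    rw [div_eq_div_iff (hE s hs).ne' (hE u hu).ne'] at h
    have h2 : x * (1 - x) * (s - u) = 0 := by linear_combination h
    simp only [mul_eq_zero, hx.ne', hy.ne', false_or] at h2
    linarith
  have hder : ∀ s ∈ Ioo (0 : ℝ) 1, HasDerivWithinAt T
      (x * (1 - x) / (1 - x + x * s) ^ 2) (Ioo 0 1) s := by
    intro s hs
    have h1 : HasDerivAt (fun s : ℝ => x * s) x s := by
      simpa using (hasDerivAt_id s).const_mul x
    have h2 := h1.div (h1.const_add (1 - x)) (hE s hs).ne'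
    refine (h2.congr_deriv ?_).hasDerivWithinAt
    congr 1
    ring
  have habs : ∀ s, |x * (1 - x) / (1 - x + x * s) ^ 2| = x * (1 - x) / (1 - x + x * s) ^ 2 :=
    fun s => abs_of_nonneg (by positivity)
  have k1 := integral_image_eq_integral_abs_deriv_smul measurableSet_Ioo hder hinj f
  have k2 := integrableOn_image_iff_integrableOn_abs_deriv_smul measurableSet_Ioo hder hinj f
  rw [himg] at k1 k2
  simp only [habs, smul_eq_mul] at k1 k2
  exact ⟨k1, k2⟩

/-- The Möbius transformation with `0 ↦ 1`, `1 ↦ x`, `∞ ↦ 0` as a change of variables. -/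
theorem mobius_right {x : ℝ} (hx : 0 < x) (hx1 : x < 1) (f : ℝ → ℝ) :
    (∫ t in Ioo x 1, f t = ∫ s in Ioo (0 : ℝ) 1,
      x * (1 - x) / ((1 - x) * s + x) ^ 2 * f (x / ((1 - x) * s + x))) ∧
    (IntegrableOn f (Ioo x 1) ↔ IntegrableOn (fun s =>
      x * (1 - x) / ((1 - x) * s + x) ^ 2 * f (x / ((1 - x) * s + x))) (Ioo 0 1)) := by
  have hy : 0 < 1 - x := sub_pos.2 hx1
  set T : ℝ → ℝ := fun s => x / ((1 - x) * s + x) with hT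
  have hE : ∀ s ∈ Ioo (0 : ℝ) 1, 0 < (1 - x) * s + x := fun s hs => by have := hs.1; positivity
  have himg : T '' Ioo 0 1 = Ioo x 1 := by
    ext t
    constructor
    · rintro ⟨s, hs, rfl⟩
      have h0 := hE s hs
      have h1 := hs.1
      simp only [hT]
      constructor
      · rw [lt_div_iff₀ h0]
        nlinarith [mul_pos (mul_pos hx hy) (sub_pos.2 hs.2)]
      · rw [div_lt_one h0]
        nlinarith [mul_pos hy h1]
    · rintro ⟨h0, h1⟩
      have h2 : 0 < 1 - t := by linarith
      have h3 : 0 < t := by linarith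
      refine ⟨x * (1 - t) / (t * (1 - x)), ⟨by positivity, ?_⟩, ?_⟩
      · rw [div_lt_one (by positivity)]; nlinarith
      · simp only [hT]
        have : (1 - x) * (x * (1 - t) / (t * (1 - x))) + x = x / t := by
          field_simp; ring
        rw [this]
        field_simp
  have hinj : InjOn T (Ioo 0 1) := by
    intro s hs u hu h
    simp only [hT] at h
    rw [div_eq_div_iff (hE s hs).ne' (hE u hu).ne'] at h
    have h2 : x * (1 - x) * (s - u) = 0 := by linear_combination -h
    simp only [mul_eq_zero, hx.ne', hy.ne', false_or] at h2
    linarith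
  have hder : ∀ s ∈ Ioo (0 : ℝ) 1, HasDerivWithinAt T
      (-(x * (1 - x) / ((1 - x) * s + x) ^ 2)) (Ioo 0 1) s := by
    intro s hs
    have h1 : HasDerivAt (fun s : ℝ => (1 - x) * s + x) (1 - x) s := by
      simpa using ((hasDerivAt_id s).const_mul (1 - x)).add_const x
    have h2 := (hasDerivAt_const s x).div h1 (hE s hs).ne'
    refine (h2.congr_deriv ?_).hasDerivWithinAt
    rw [← neg_div]
    congr 1
    ring
  have habs : ∀ s, |-(x * (1 - x) / ((1 - x) * s + x) ^ 2)|
      = x * (1 - x) / ((1 - x) * s + x) ^ 2 :=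
    fun s => by rw [abs_neg]; exact abs_of_nonneg (by positivity)
  have k1 := integral_image_eq_integral_abs_deriv_smul measurableSet_Ioo hder hinj f
  have k2 := integrableOn_image_iff_integrableOn_abs_deriv_smul measurableSet_Ioo hder hinj f
  rw [himg] at k1 k2
  simp only [habs, smul_eq_mul] at k1 k2
  exact ⟨k1, k2⟩

/-- Integrability of the weight `(r (1 - s) ^ 2 / s) ^ (-a) / s` against a continuous function. -/
theorem integrableOn_weight_mul {a r : ℝ} (ha : 0 < a) (ha2 : a < 1 / 2) (hr : 0 < r)
    {φ : ℝ → ℝ} (hφ : ContinuousOn φ (Icc 0 1)) :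
    IntegrableOn (fun s => (r * (1 - s) ^ 2 / s) ^ (-a) / s * φ s) (Ioo 0 1) := by
  have h := integrableOn_beta (p := a) (q := 1 - 2 * a) ha (by linarith)
  rw [← integrableOn_Icc_iff_integrableOn_Ioo] at h
  have h2 := IntegrableOn.mul_continuousOn (h.const_mul (r ^ (-a))) hφ isCompact_Icc
  rw [integrableOn_Icc_iff_integrableOn_Ioo] at h2
  refine h2.congr_fun (fun s hs => ?_) measurableSet_Ioo
  have h0 := hs.1
  have h1 : 0 < 1 - s := sub_pos.2 hs.2
  beta_reduce
  rw [div_rpow (by positivity) h0.le, mul_rpow hr.le (by positivity), ← rpow_natCast (1 - s) 2,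
    ← rpow_mul h1.le, rpow_neg h0.le a, rpow_sub_one h0.ne',
    show ((2 : ℕ) : ℝ) * -a = 1 - 2 * a - 1 by push_cast; ring, div_inv_eq_mul]
  ring

/-- The singular integral with the exponents written in terms of `a = (1 - k) / 2`. -/
theorem integral_sign_mul_jacobi_weight {a x : ℝ} (ha : 0 < a) (ha2 : a < 1 / 2) (hx : 0 < x)
    (hx1 : x < 1) :
    ∫ t in (0 : ℝ)..1, Real.sign (x - t) * |x - t| ^ (-(2 * a)) * (1 - t) ^ a * t ^ (a - 1)
        * (t + a) = 2 * a * (π / sin (π * a)) * x := by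
  have hy : 0 < 1 - x := sub_pos.2 hx1
  have hr : 0 < x * (1 - x) := mul_pos hx hy
  set f : ℝ → ℝ := fun t => Real.sign (x - t) * |x - t| ^ (-(2 * a)) * (1 - t) ^ a * t ^ (a - 1)
        * (t + a) with hf
  set Y : ℝ → ℝ := fun s => (x * (1 - x) * (1 - s) ^ 2 / s) ^ (-a) with hY
  obtain ⟨l1, l2⟩ := mobius_left hx hx1 f
  obtain ⟨r1, r2⟩ := mobius_right hx hx1 f
  have hl : EqOn (fun s => x * (1 - x) / (1 - x + x * s) ^ 2 * f (x * s / (1 - x + x * s)))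
      (fun s => Y s / s * ((1 - x) / (1 - x + x * s) ^ 2 * (x * s + a * (1 - x + x * s))))
      (Ioo 0 1) := by
    intro s hs
    have h0 := hs.1
    have h1 : 0 < 1 - s := sub_pos.2 hs.2
    have hE : 0 < 1 - x + x * s := by positivity
    have ht : 1 - x * s / (1 - x + x * s) = (1 - x) / (1 - x + x * s) := by field_simp; ring
    have hd : x - x * s / (1 - x + x * s) = x * (1 - x) * (1 - s) / (1 - x + x * s) := by
      field_simp; ring
    have hdp : 0 < x - x * s / (1 - x + x * s) := by rw [hd]; positivity
    have htp : 0 < 1 - x * s / (1 - x + x * s) := by rw [ht]; positivity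
    have hq : (x - x * s / (1 - x + x * s)) ^ 2
        / (x * s / (1 - x + x * s) * (1 - x * s / (1 - x + x * s)))
        = x * (1 - x) * (1 - s) ^ 2 / s := by
      rw [ht, hd]; field_simp
    simp only [hf]
    rw [Real.sign_of_pos hdp, abs_of_pos hdp, one_mul,
      rpow_jacobi_weight_eq hdp (by positivity) (by linarith), hq]
    change _ * (Y s / _ * _) = _
    generalize Y s = c
    field_simp
  have hR : EqOn (fun s => x * (1 - x) / ((1 - x) * s + x) ^ 2 * f (x / ((1 - x) * s + x)))
      (fun s => Y s / s * (-((1 - x) / ((1 - x) * s + x) ^ 2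
        * (s * (x + a * ((1 - x) * s + x)))))) (Ioo 0 1) := by
    intro s hs
    have h0 := hs.1
    have h1 : 0 < 1 - s := sub_pos.2 hs.2
    have hE : 0 < (1 - x) * s + x := by positivity
    have ht : 1 - x / ((1 - x) * s + x) = (1 - x) * s / ((1 - x) * s + x) := by field_simp; ring
    have hd : -(x - x / ((1 - x) * s + x)) = x * (1 - x) * (1 - s) / ((1 - x) * s + x) := by
      field_simp; ring
    have hdp : 0 < -(x - x / ((1 - x) * s + x)) := by rw [hd]; positivity
    have htp : 0 < 1 - x / ((1 - x) * s + x) := by rw [ht]; positivity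
    have hq : (-(x - x / ((1 - x) * s + x))) ^ 2
        / (x / ((1 - x) * s + x) * (1 - x / ((1 - x) * s + x)))
        = x * (1 - x) * (1 - s) ^ 2 / s := by
      rw [ht, hd]; field_simp
    simp only [hf]
    rw [Real.sign_of_neg (neg_pos.1 hdp), abs_of_neg (neg_pos.1 hdp), mul_assoc (-1 : ℝ),
      mul_assoc (-1 : ℝ),
      rpow_jacobi_weight_eq hdp (by positivity) (by linarith), hq]
    change _ * (-1 * (Y s / _) * _) = _
    generalize Y s = c
    field_simp
  have hcl : ContinuousOn
      (fun s => (1 - x) / (1 - x + x * s) ^ 2 * (x * s + a * (1 - x + x * s))) (Icc 0 1) := by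
    refine ContinuousOn.mul (ContinuousOn.div (by fun_prop) (by fun_prop) fun s hs => ?_)
      (by fun_prop)
    have := hs.1
    positivity
  have hcr : ContinuousOn (fun s => -((1 - x) / ((1 - x) * s + x) ^ 2
        * (s * (x + a * ((1 - x) * s + x))))) (Icc 0 1) := by
    refine (ContinuousOn.mul (ContinuousOn.div (by fun_prop) (by fun_prop) fun s hs => ?_)
      (by fun_prop)).neg
    have := hs.1
    positivity
  have il := integrableOn_weight_mul ha ha2 hr hcl
  have ir := integrableOn_weight_mul ha ha2 hr hcr
  have fl : IntegrableOn f (Ioo 0 x) := l2.2 (il.congr_fun hl.symm measurableSet_Ioo)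
  have fr : IntegrableOn f (Ioo x 1) := r2.2 (ir.congr_fun hR.symm measurableSet_Ioo)
  rw [← intervalIntegral.integral_add_adjacent_intervals
      ((intervalIntegrable_iff_integrableOn_Ioo_of_le hx.le).2 fl)
      ((intervalIntegrable_iff_integrableOn_Ioo_of_le hx1.le).2 fr),
    intervalIntegral.integral_of_le hx.le, intervalIntegral.integral_of_le hx1.le,
    integral_Ioc_eq_integral_Ioo, integral_Ioc_eq_integral_Ioo, l1, r1,
    setIntegral_congr_fun measurableSet_Ioo hl, setIntegral_congr_fun measurableSet_Ioo hR,
    ← integral_add il ir]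
  have hB := integral_Ioo_beta_combination ha (by linarith) (1 - 2 * x)
  rw [integral_Ioo_comp_quadratic_ratio hr] at hB
  rw [show 2 * a * (π / sin (π * a)) * x = a * (1 - (1 - 2 * x)) * (π / sin (π * a)) by ring, ← hB]
  refine setIntegral_congr_fun measurableSet_Ioo fun s hs => ?_
  have h0 := hs.1
  have h1 : 0 < 1 - s := sub_pos.2 hs.2
  have hE1 : 0 < 1 - x + x * s := by positivity
  have hE2 : 0 < (1 - x) * s + x := by positivity
  have hD : s + x * (1 - x) * (1 - s) ^ 2 = (1 - x + x * s) * ((1 - x) * s + x) := by ring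
  have hw : 1 - x * (1 - x) * (1 - s) ^ 2 / (s + x * (1 - x) * (1 - s) ^ 2)
      = s / (s + x * (1 - x) * (1 - s) ^ 2) := by
    field_simp; ring
  have hpow : (x * (1 - x) * (1 - s) ^ 2 / (s + x * (1 - x) * (1 - s) ^ 2)) ^ (-a)
      * (s / (s + x * (1 - x) * (1 - s) ^ 2)) ^ a = Y s := by
    rw [← inv_inv ((s / (s + x * (1 - x) * (1 - s) ^ 2)) ^ a), ← rpow_neg (by positivity),
      ← div_eq_mul_inv, ← div_rpow (by positivity) (by positivity)]
    simp only [hY]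
    congr 1
    field_simp
  rw [hw, hpow, hD]
  change Y s / s * _ + Y s / s * _ = _
  generalize Y s = c
  field_simp
  ring

theorem singular_integral_jacobi_linear (k x : ℝ) (hk : k ∈ Set.Ioo (0:ℝ) 1)
    (hx : x ∈ Set.Ioo (0:ℝ) 1) :
    (∫ t in (0:ℝ)..1, Real.sign (x - t) * |x - t| ^ (k - 1)
        * (1 - t) ^ ((1 - k) / 2) * t ^ (-(1 + k) / 2) * (t + (1 - k) / 2))
      = (π * (1 - k) / Real.sin ((1 - k) * π / 2)) * x := by
  have h := integral_sign_mul_jacobi_weight (a := (1 - k) / 2) (by linarith [hk.2])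
    (by linarith [hk.1]) hx.1 hx.2
  rw [show -(2 * ((1 - k) / 2)) = k - 1 by ring, show (1 - k) / 2 - 1 = -(1 + k) / 2 by ring,
    show π * ((1 - k) / 2) = (1 - k) * π / 2 by ring] at h
  rw [h]
  ring
end
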